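/- arXiv:2005.08166 — 2 statements merged into one kernel-verified Lean document; each statement's English description precedes it below -/
import Mathlib

section
/- If 𝔤 ⊆ co(1,n+1) is a subalgebra acting irreducibly on ℝ^{1,n+1} and 𝔤 is not contained in so(1,n+1), then 𝔤 = co(1,n+1). -/
open Module

noncomputable section

namespace Weyl

variable {V : Type*} [AddCommGroup V] [Module ℝ V]

/-- The endomorphism `X ∧ Y : Z ↦ B(X,Z)•Y − B(Y,Z)•X`. -/
def wedge (B : LinearMap.BilinForm ℝ V) (X Y : V) : Module.End ℝ V where
  toFun Z := B X Z • Y - B Y Z • X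
  map_add' z z' := by simp only [map_add, add_smul]; abel
  map_smul' c z := by simp only [map_smul, smul_eq_mul, RingHom.id_apply, mul_smul, smul_sub]

/-- The Lie algebra `so(B)` of endomorphisms skew-symmetric with respect to `B`. -/
def soSet (B : LinearMap.BilinForm ℝ V) : Set (Module.End ℝ V) :=
  {A | ∀ x y, B (A x) y + B x (A y) = 0}

/-- The conformal Lie algebra `co(B) = ℝ·id ⊕ so(B)`. -/
def coSet (B : LinearMap.BilinForm ℝ V) : Set (Module.End ℝ V) :=
  {F | ∃ c : ℝ, ∃ S ∈ soSet B, F = c • (1 : Module.End ℝ V) + S}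

/-- The first prolongation `g^{(1)}` of a set of endomorphisms:
linear maps `φ : V → g` with `φ(X)Y = φ(Y)X`. -/
def firstProlong (g : Set (Module.End ℝ V)) : Set (V →ₗ[ℝ] Module.End ℝ V) :=
  {φ | (∀ x, φ x ∈ g) ∧ ∀ x y, φ x y = φ y x}

/-- `R` is an algebraic curvature tensor of type `g` (a linear map on `Λ²V`,
encoded as an antisymmetric bilinear map, with values in `g`, satisfying the
Bianchi identity). -/
def IsCurv (g : Set (Module.End ℝ V)) (R : V →ₗ[ℝ] V →ₗ[ℝ] Module.End ℝ V) : Prop :=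
  (∀ x y, R x y = - R y x) ∧ (∀ x y, R x y ∈ g) ∧
    ∀ x y z, R x y z + R y z x + R z x y = 0

/-- `L(ℛ(g))`: the span of all values of algebraic curvature tensors of type `g`. -/
def curvSpan (g : Set (Module.End ℝ V)) : Submodule ℝ (Module.End ℝ V) :=
  Submodule.span ℝ {F | ∃ R, IsCurv g R ∧ ∃ x y, F = R x y}

/-- `g` is a Berger algebra: `L(ℛ(g)) = g`. -/
def IsBerger (g : Set (Module.End ℝ V)) : Prop :=
  (curvSpan g : Set (Module.End ℝ V)) = g

/-- `g` is (the underlying set of) a Lie subalgebra of `gl(V)`. -/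
def IsLieSub (g : Set (Module.End ℝ V)) : Prop :=
  (0 : Module.End ℝ V) ∈ g ∧ (∀ F ∈ g, ∀ F' ∈ g, F + F' ∈ g) ∧
    (∀ (c : ℝ), ∀ F ∈ g, c • F ∈ g) ∧ ∀ F ∈ g, ∀ F' ∈ g, F * F' - F' * F ∈ g

/-- The subspace `W` is invariant under every element of `g`. -/
def Invariant (g : Set (Module.End ℝ V)) (W : Submodule ℝ V) : Prop :=
  ∀ F ∈ g, ∀ x ∈ W, F x ∈ W

/-- The restriction of `B` to `W` is nondegenerate. -/
def IsNondegOn (B : LinearMap.BilinForm ℝ V) (W : Submodule ℝ V) : Prop :=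
  ∀ x ∈ W, (∀ y ∈ W, B x y = 0) → x = 0

/-- Weak irreducibility: no proper nonzero invariant nondegenerate subspace. -/
def WeaklyIrred (B : LinearMap.BilinForm ℝ V) (g : Set (Module.End ℝ V)) : Prop :=
  ∀ W : Submodule ℝ V, Invariant g W → IsNondegOn B W → W = ⊥ ∨ W = ⊤

/-- Irreducibility: no proper nonzero invariant subspace. -/
def Irred (g : Set (Module.End ℝ V)) : Prop :=
  ∀ W : Submodule ℝ V, Invariant g W → W = ⊥ ∨ W = ⊤

/-- The Euclidean dot product on `Fin n → ℝ`. -/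
def dotE (n : ℕ) : LinearMap.BilinForm ℝ (Fin n → ℝ) :=
  LinearMap.mk₂ ℝ (fun x y => ∑ i, x i * y i)
    (fun x x' y => by simp [add_mul, Finset.sum_add_distrib])
    (fun c x y => by simp [Finset.mul_sum, mul_assoc])
    (fun x y y' => by simp [mul_add, Finset.sum_add_distrib])
    (fun c x y => by
      simp only [Pi.smul_apply, smul_eq_mul, Finset.mul_sum]
      exact Finset.sum_congr rfl fun i _ => by ring)

/-- Minkowski space `ℝ^{1,n+1}` in Witt coordinates: the vector `(v, x, u)`
represents `v·p + x + u·q` with respect to a Witt basis `p, e₁, …, eₙ, q`. -/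
abbrev Mink (n : ℕ) := ℝ × (Fin n → ℝ) × ℝ

/-- The Minkowski metric in Witt coordinates: `p, q` are isotropic, `(p,q) = 1`,
and the form is the Euclidean one on the `ℝⁿ`-part orthogonal to `p` and `q`. -/
def minkB (n : ℕ) : LinearMap.BilinForm ℝ (Mink n) :=
  LinearMap.mk₂ ℝ (fun X Y => X.1 * Y.2.2 + X.2.2 * Y.1 + dotE n X.2.1 Y.2.1)
    (fun X X' Y => by
      simp only [Prod.fst_add, Prod.snd_add, Pi.add_apply, map_add,
        LinearMap.add_apply]
      ring)
    (fun c X Y => by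
      simp only [Prod.smul_fst, Prod.smul_snd, smul_eq_mul, map_smul,
        LinearMap.smul_apply]
      ring)
    (fun X Y Y' => by
      simp only [Prod.fst_add, Prod.snd_add, Pi.add_apply, map_add,
        LinearMap.add_apply]
      ring)
    (fun c X Y => by
      simp only [Prod.smul_fst, Prod.smul_snd, smul_eq_mul, map_smul,
        LinearMap.smul_apply]
      ring)

/-- The Witt basis vector `p`. -/
def pvec (n : ℕ) : Mink n := (1, 0, 0)

/-- The Witt basis vector `q`. -/
def qvec (n : ℕ) : Mink n := (0, 0, 1)

/-- The embedding of `ℝⁿ` into Minkowski space. -/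
def emb {n : ℕ} (x : Fin n → ℝ) : Mink n := (0, x, 0)



/-! ### Abstract Lorentzian spaces -/

/-- `B` is symmetric, `t` is timelike and `B` is positive definite on the orthogonal
complement of `t`. -/
structure Lor (B : LinearMap.BilinForm ℝ V) (t : V) : Prop where
  symm : ∀ x y, B x y = B y x
  neg : B t t < 0
  pos : ∀ w, B t w = 0 → w ≠ 0 → 0 < B w w

theorem Lor.nonneg {B : LinearMap.BilinForm ℝ V} {t : V} (L : Lor B t) {w : V}
    (h : B t w = 0) : 0 ≤ B w w := by
  by_cases hw : w = 0
  · simp [hw]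
  · exact (L.pos w h hw).le

theorem Lor.nondeg {B : LinearMap.BilinForm ℝ V} {t : V} (L : Lor B t) {x : V}
    (h : ∀ y, B x y = 0) : x = 0 := by
  by_contra hx
  have := L.pos x (by rw [L.symm]; exact h t) hx
  rw [h x] at this
  exact lt_irrefl _ this

theorem Lor.comb {B : LinearMap.BilinForm ℝ V} {t : V} (L : Lor B t) {v w : V}
    (hv : B v v ≤ 0) (hw : B w w ≤ 0) (hvw : B v w = 0) :
    ∃ a b : ℝ, (a ≠ 0 ∨ b ≠ 0) ∧ a • v + b • w = 0 := by
  have key : ∀ a b : ℝ, B t (a • v + b • w) = 0 → a • v + b • w = 0 := by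
    intro a b h
    by_contra hne
    have h1 := L.pos _ h hne
    have h2 : B (a • v + b • w) (a • v + b • w) = a ^ 2 * B v v + b ^ 2 * B w w := by
      simp only [map_add, map_smul, LinearMap.add_apply, LinearMap.smul_apply, smul_eq_mul, hvw,
        L.symm w v]
      ring
    rw [h2] at h1
    nlinarith [mul_nonneg (sq_nonneg a) (neg_nonneg.2 hv), mul_nonneg (sq_nonneg b) (neg_nonneg.2 hw)]
  by_cases h : B t v = 0
  · exact ⟨1, 0, by simp, key 1 0 (by simp [h])⟩
  · refine ⟨B t w, - B t v, Or.inr (neg_ne_zero.2 h), key _ _ ?_⟩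
    simp; ring

theorem Lor.pos' {B : LinearMap.BilinForm ℝ V} {t : V} (L : Lor B t) {v w : V}
    (hv : B v v < 0) (hvw : B v w = 0) (hw : w ≠ 0) : 0 < B w w := by
  by_contra h
  push Not at h
  obtain ⟨a, b, hab, h0⟩ := L.comb hv.le h hvw
  have h1 : B v (a • v + b • w) = 0 := by rw [h0]; simp
  simp [hvw] at h1
  have ha : a = 0 := by rcases h1 with h1 | h1; exact h1; exact absurd h1 hv.ne
  subst ha
  simp at hab h0
  tauto

/-- Null orthogonal vectors are dependent. -/
theorem Lor.null {B : LinearMap.BilinForm ℝ V} {t : V} (L : Lor B t) {v w : V}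
    (hv : B v v = 0) (hw : B w w = 0) (hvw : B v w = 0) (hne : v ≠ 0) : ∃ c : ℝ, w = c • v := by
  obtain ⟨a, b, hab, h0⟩ := L.comb hv.le hw.le hvw
  have hb : b ≠ 0 := by
    rintro rfl
    simp at hab h0
    tauto
  refine ⟨- (b⁻¹ * a), ?_⟩
  have : b • w = - (a • v) := by rw [eq_neg_iff_add_eq_zero, add_comm]; exact h0
  calc w = b⁻¹ • (b • w) := by rw [smul_smul, inv_mul_cancel₀ hb, one_smul]
    _ = _ := by rw [this, smul_neg, smul_smul, neg_smul]

theorem so_self {B : LinearMap.BilinForm ℝ V} {t : V} (L : Lor B t) {A : Module.End ℝ V}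
    (hA : A ∈ soSet B) (x : V) : B x (A x) = 0 := by
  have := hA x x
  rw [L.symm (A x) x] at this
  linarith

theorem so_swap {B : LinearMap.BilinForm ℝ V} {A : Module.End ℝ V}
    (hA : A ∈ soSet B) (x y : V) : B (A x) y = - B x (A y) := by
  have := hA x y
  linarith

/-- A complex eigenvalue `a + b i` with `a ≠ 0` of a skew operator is real. -/
theorem eig_real {B : LinearMap.BilinForm ℝ V} {t : V} (L : Lor B t) {A : Module.End ℝ V}
    (hA : A ∈ soSet B) {a b : ℝ} {u v : V} (hne : u ≠ 0 ∨ v ≠ 0)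
    (hu : A u = a • u - b • v) (hv : A v = b • u + a • v) (ha : a ≠ 0) :
    ∃ l : ℝ, l ≠ 0 ∧ ∃ w, w ≠ 0 ∧ A w = l • w := by
  have e1 := so_self L hA u
  have e2 := so_self L hA v
  have e3 := hA u v
  rw [hu] at e1
  rw [hv] at e2
  rw [hu, hv] at e3
  simp only [map_add, map_sub, map_smul, LinearMap.add_apply, LinearMap.sub_apply,
    LinearMap.smul_apply, smul_eq_mul, L.symm v u] at e1 e2 e3
  have h1 : B u v = 0 := by
    have : (a ^ 2 + b ^ 2) * B u v = 0 := by linear_combination (a / 2) * e3 + (b/2) * e2 - (b/2) * e1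
    rcases mul_eq_zero.1 this with h | h
    · nlinarith [sq_nonneg b, sq_pos_of_ne_zero ha]
    · exact h
  rw [h1] at e1 e2
  have h2 : B u u = 0 := by simpa [ha] using e1
  have h3 : B v v = 0 := by simpa [ha] using e2
  by_cases hu0 : u = 0
  · subst hu0
    exact ⟨a, ha, v, by simpa using hne, by simpa using hv⟩
  · obtain ⟨c, rfl⟩ := L.null h2 h3 h1 hu0
    have e4 : (c * (a - b * c)) • u = (b + a * c) • u := by
      rw [map_smul, hu] at hv
      convert hv using 1 <;> module
    have e5 := smul_left_injective ℝ hu0 e4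
    have hb : b = 0 := by
      have : b * (1 + c ^ 2) = 0 := by linear_combination -e5
      rcases mul_eq_zero.1 this with h | h
      · exact h
      · nlinarith [sq_nonneg c]
    refine ⟨a, ha, u, hu0, ?_⟩
    rw [hu, hb]; simp

/-- A complex root of the characteristic polynomial gives a real pair of vectors. -/
theorem cx_eig {ι : Type*} [Fintype ι] [DecidableEq ι] (b : Basis ι ℝ V) (A : Module.End ℝ V)
    (z : ℂ) (hz : z ∈ spectrum ℂ ((LinearMap.toMatrix b b A).map (algebraMap ℝ ℂ))) :
    ∃ u v : V, (u ≠ 0 ∨ v ≠ 0) ∧ A u = z.re • u - z.im • v ∧ A v = z.im • u + z.re • v := by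
  set M := LinearMap.toMatrix b b A with hM
  rw [← Matrix.spectrum_toLin', ← Module.End.hasEigenvalue_iff_mem_spectrum] at hz
  obtain ⟨w, hw⟩ := hz.exists_hasEigenvector
  have hw1 := hw.apply_eq_smul
  have hw0 := hw.2
  rw [Matrix.toLin'_apply] at hw1
  have hAb : ∀ f : ι → ℝ, A (∑ i, f i • b i) = ∑ i, (M.mulVec f) i • b i := by
    intro f
    apply b.repr.injective
    ext i
    have := congrFun (LinearMap.toMatrix_mulVec_repr b b A (∑ i, f i • b i)) i
    rw [← this, ← hM, Basis.repr_sum_self, Basis.repr_sum_self]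
  have hre : M.mulVec (fun i => (w i).re) = fun i => z.re * (w i).re - z.im * (w i).im := by
    ext i
    have := congrArg Complex.re (congrFun hw1 i)
    simpa [Matrix.mulVec, dotProduct] using this
  have him : M.mulVec (fun i => (w i).im) = fun i => z.im * (w i).re + z.re * (w i).im := by
    ext i
    have := congrArg Complex.im (congrFun hw1 i)
    simp [Matrix.mulVec, dotProduct] at this ⊢
    linarith
  refine ⟨∑ i, (w i).re • b i, ∑ i, (w i).im • b i, ?_, ?_, ?_⟩
  · by_contra hcon
    push Not at hcon
    apply hw0
    ext i
    have h1 := Fintype.linearIndependent_iff.1 b.linearIndependent _ hcon.1 i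
    have h2 := Fintype.linearIndependent_iff.1 b.linearIndependent _ hcon.2 i
    exact Complex.ext h1 h2
  · rw [hAb, hre]
    simp only [sub_smul, Finset.sum_sub_distrib, Finset.smul_sum, mul_smul]
  · rw [hAb, him]
    simp only [add_smul, Finset.sum_add_distrib, Finset.smul_sum, mul_smul]

/-- If a skew operator has no nonzero real eigenvalue, then `tr A² ≤ 0`, with equality only for
nilpotent operators. -/
theorem trace_sq [FiniteDimensional ℝ V] {B : LinearMap.BilinForm ℝ V} {t : V} (L : Lor B t)
    {A : Module.End ℝ V} (hA : A ∈ soSet B)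
    (hno : ∀ l : ℝ, l ≠ 0 → ∀ w, A w = l • w → w = 0) :
    LinearMap.trace ℝ V (A * A) ≤ 0 ∧ (LinearMap.trace ℝ V (A * A) = 0 → IsNilpotent A) := by
  classical
  let b := Module.finBasis ℝ V
  set M := LinearMap.toMatrix b b A with hM
  set Mc := M.map (algebraMap ℝ ℂ) with hMc
  have hroot : ∀ w ∈ (Mc ^ 2).charpoly.roots, w.re ≤ 0 ∧ w.im = 0 := by
    intro w hw
    have hw1 : w ∈ spectrum ℂ (Mc ^ 2) := by
      rw [Matrix.mem_spectrum_iff_isRoot_charpoly]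
      exact Polynomial.isRoot_of_mem_roots hw
    rw [spectrum.map_pow_of_pos _ (by norm_num)] at hw1
    obtain ⟨z, hz, rfl⟩ := hw1
    obtain ⟨u, v, hne, hu, hv⟩ := cx_eig b A z hz
    have : z.re = 0 := by
      by_contra h
      obtain ⟨l, hl, w, hw, hAw⟩ := eig_real L hA hne hu hv h
      exact hw (hno l hl w hAw)
    simp [pow_two, this]
    nlinarith [sq_nonneg z.im]
  have htr : ((LinearMap.trace ℝ V (A * A) : ℝ) : ℂ) = (Mc ^ 2).charpoly.roots.sum := by
    rw [← Matrix.trace_eq_sum_roots_charpoly, LinearMap.trace_eq_matrix_trace ℝ b,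
      LinearMap.toMatrix_mul, ← hM, hMc, pow_two, ← Matrix.map_mul]
    simp [Matrix.trace]
  have hre : LinearMap.trace ℝ V (A * A) = ((Mc ^ 2).charpoly.roots.map Complex.re).sum := by
    have := congrArg Complex.re htr
    rw [Complex.ofReal_re] at this
    rw [this]
    exact map_multiset_sum Complex.reAddGroupHom _
  have h1 : ∀ x ∈ (Mc ^ 2).charpoly.roots.map (fun w => - w.re), (0:ℝ) ≤ x := by
    intro x hx
    obtain ⟨w, hw, rfl⟩ := Multiset.mem_map.1 hx
    have := (hroot w hw).1
    linarith
  have h2 : ((Mc ^ 2).charpoly.roots.map (fun w => - w.re)).sum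
      = - LinearMap.trace ℝ V (A * A) := by
    rw [hre, ← Multiset.sum_map_neg]
  refine ⟨?_, ?_⟩
  · have := Multiset.sum_nonneg h1
    linarith
  · intro h0
    have hz : ∀ w ∈ (Mc ^ 2).charpoly.roots, w = 0 := by
      intro w hw
      have h3 : - w.re = 0 := Multiset.all_zero_of_le_zero_le_of_sum_eq_zero h1
        (by rw [h2, h0, neg_zero]) _ (Multiset.mem_map_of_mem _ hw)
      exact Complex.ext (by simpa using h3) (hroot w hw).2
    have hch : (Mc ^ 2).charpoly = Polynomial.X ^ (Mc ^ 2).charpoly.natDegree := by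
      have hs := IsAlgClosed.splits (Mc ^ 2).charpoly
      have h1 := hs.eq_prod_roots_of_monic (Matrix.charpoly_monic _)
      have h2 := hs.natDegree_eq_card_roots
      rw [h2]
      conv_lhs => rw [h1, Multiset.eq_replicate_card.2 hz]
      simp
    have hnil : Mc ^ (2 * (Mc ^ 2).charpoly.natDegree) = 0 := by
      have := Matrix.aeval_self_charpoly (Mc ^ 2)
      rw [hch] at this
      rw [pow_mul]
      simpa using this
    refine ⟨2 * (Mc ^ 2).charpoly.natDegree, ?_⟩
    apply (LinearMap.toMatrixAlgEquiv b).injective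
    rw [map_pow, map_zero]
    have hinj : Function.Injective ((algebraMap ℝ ℂ).mapMatrix (m := Fin (Module.finrank ℝ V))) :=
      Matrix.map_injective (algebraMap ℝ ℂ).injective
    apply hinj
    rw [map_pow, map_zero]
    exact hnil

/-! ### Positive definite forms -/

/-- The inner product core of a positive definite form. -/
def formCore {N : Type*} [AddCommGroup N] [Module ℝ N] (M : LinearMap.BilinForm ℝ N)
    (hs : ∀ x y, M x y = M y x) (hp : ∀ x, x ≠ 0 → 0 < M x x) : InnerProductSpace.Core ℝ N where
  inner x y := M x y
  conj_inner_symm x y := by simp [hs x y]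
  re_inner_nonneg x := by
    by_cases hx : x = 0
    · simp [hx]
    · simpa using (hp x hx).le
  add_left x y z := by simp
  smul_left x y r := by simp
  definite x h := by
    by_contra hx
    exact (hp x hx).ne' h

theorem exists_orthonormal {N : Type*} [AddCommGroup N] [Module ℝ N] [FiniteDimensional ℝ N]
    (M : LinearMap.BilinForm ℝ N)
    (hs : ∀ x y, M x y = M y x) (hp : ∀ x, x ≠ 0 → 0 < M x x) :
    ∃ b : Basis (Fin (finrank ℝ N)) ℝ N, ∀ i j, M (b i) (b j) = if i = j then 1 else 0 := by
  let _ : NormedAddCommGroup N := (formCore M hs hp).toNormedAddCommGroup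
  let _ : InnerProductSpace ℝ N := InnerProductSpace.ofCore (formCore M hs hp).toCore
  let b := stdOrthonormalBasis ℝ N
  refine ⟨b.toBasis, fun i j => ?_⟩
  have := orthonormal_iff_ite.1 b.orthonormal i j
  simp only [OrthonormalBasis.coe_toBasis]
  exact this

/-- Simultaneous diagonalisation, weak form. -/
theorem exists_eig {N : Type*} [AddCommGroup N] [Module ℝ N] [FiniteDimensional ℝ N]
    (M P : LinearMap.BilinForm ℝ N)
    (hs : ∀ x y, M x y = M y x) (hp : ∀ x, x ≠ 0 → 0 < M x x)
    (hPs : ∀ x y, P x y = P y x) (hP : ∃ x y, P x y ≠ 0) :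
    ∃ x : N, x ≠ 0 ∧ ∃ s : ℝ, s ≠ 0 ∧ ∀ y, P x y = s * M x y := by
  let _ : NormedAddCommGroup N := (formCore M hs hp).toNormedAddCommGroup
  let _ : InnerProductSpace ℝ N := InnerProductSpace.ofCore (formCore M hs hp).toCore
  have hin : ∀ x y : N, inner ℝ x y = M x y := fun x y => rfl
  let G : N →ₗ[ℝ] N := (InnerProductSpace.toDual ℝ N).symm.toLinearEquiv.toLinearMap ∘ₗ
    (LinearMap.toContinuousLinearMap : (N →ₗ[ℝ] ℝ) ≃ₗ[ℝ] _).toLinearMap ∘ₗ P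
  have hG : ∀ x y, M (G x) y = P x y := by
    intro x y
    rw [← hin]
    simp [G]
  have hsym : G.IsSymmetric := by
    intro x y
    rw [hin, hin, hG, hs, hG, hPs]
  by_contra hcon
  push Not at hcon
  obtain ⟨x, y, hxy⟩ := hP
  apply hxy
  have hG0 : G = 0 := by
    apply (hsym.eigenvectorBasis rfl).toBasis.ext
    intro i
    have h1 := hsym.apply_eigenvectorBasis rfl i
    have hne : hsym.eigenvectorBasis rfl i ≠ 0 := by
      simpa using (hsym.eigenvectorBasis rfl).toBasis.ne_zero i
    have h2 : hsym.eigenvalues rfl i = 0 := by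
      by_contra h0
      obtain ⟨y, hy⟩ := hcon _ hne _ h0
      apply hy
      rw [← hG, h1]
      simp
    simp [h1, h2]
  rw [← hG, hG0]
  simp

/-! ### Existence of a hyperbolic element -/

theorem trace_lie_inv [FiniteDimensional ℝ V] (X A C : Module.End ℝ V) :
    LinearMap.trace ℝ V ((X * A - A * X) * C) = - LinearMap.trace ℝ V (A * (X * C - C * X)) := by
  rw [sub_mul, mul_sub, map_sub, map_sub, mul_assoc X A C, LinearMap.trace_mul_comm ℝ X (A * C),
    mul_assoc, mul_assoc]
  ring

section
attribute [local instance] LieRing.ofAssociativeRing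

theorem engel_zero [FiniteDimensional ℝ V] (h n : Submodule ℝ (Module.End ℝ V))
    (hirr : Irred (h : Set (Module.End ℝ V))) [Nontrivial V]
    (hid : ∀ X ∈ h, ∀ A ∈ n, X * A - A * X ∈ n) (hnh : n ≤ h)
    (hnil : ∀ A ∈ n, IsNilpotent A) : n = ⊥ := by
  let n' : LieSubalgebra ℝ (Module.End ℝ V) :=
    { n with lie_mem' := fun {x y} hx hy => hid x (hnh hx) y hy }
  have hN : LieModule.IsNilpotent n' V := by
    rw [LieModule.isNilpotent_iff_forall' (R := ℝ)]
    intro x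
    exact hnil x.1 x.2
  have hnt := LieModule.nontrivial_max_triv_of_isNilpotent ℝ n' V
  obtain ⟨v, hv⟩ := exists_ne (0 : LieModule.maxTrivSubmodule ℝ n' V)
  have hv' : ∀ A ∈ n, A v.1 = 0 := by
    intro A hA
    have := (LieModule.mem_maxTrivSubmodule (R := ℝ) (L := n') (M := V) v.1).1 v.2 ⟨A, hA⟩
    exact this
  let W : Submodule ℝ V :=
    { carrier := {x | ∀ A ∈ n, A x = 0}
      add_mem' := fun {x y} hx hy A hA => by rw [map_add, hx A hA, hy A hA, add_zero]
      zero_mem' := fun A _ => map_zero A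
      smul_mem' := fun c x hx A hA => by rw [map_smul, hx A hA, smul_zero] }
  have hW : Invariant (h : Set (Module.End ℝ V)) W := by
    intro X hX x hx A hA
    have h1 := hx _ (hid X hX A hA)
    have h2 := hx A hA
    rw [LinearMap.sub_apply, Module.End.mul_apply, Module.End.mul_apply, h2, map_zero, zero_sub,
      neg_eq_zero] at h1
    exact h1
  rcases hirr W hW with h0 | h1
  · exfalso
    apply hv
    have : v.1 ∈ W := hv'
    rw [h0, Submodule.mem_bot] at this
    exact Subtype.ext this
  · rw [Submodule.eq_bot_iff]
    intro A hA
    ext x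
    have : x ∈ W := by rw [h1]; trivial
    exact this A hA

end

theorem schur [FiniteDimensional ℝ V] [Nontrivial V] (h : Set (Module.End ℝ V)) (hirr : Irred h)
    (C : Module.End ℝ V) (hC : ∀ X ∈ h, X * C = C * X) :
    (∃ c : ℝ, C = c • 1) ∨ ∃ (a b : ℝ), b ≠ 0 ∧ (C - a • 1) * (C - a • 1) = - (b ^ 2) • 1 := by
  have hmon := minpoly.monic (Algebra.IsIntegral.isIntegral (R := ℝ) C)
  have hnu : ¬ IsUnit (minpoly ℝ C) := minpoly.not_isUnit ℝ C
  obtain ⟨q, hq, r, hr⟩ := WfDvdMonoid.exists_irreducible_factor hnu hmon.ne_zero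
  have hq0 : Polynomial.aeval C q = 0 := by
    let W : Submodule ℝ V := LinearMap.ker (Polynomial.aeval C q)
    have hcomm : ∀ X ∈ h, X * Polynomial.aeval C q = Polynomial.aeval C q * X := by
      intro X hX
      clear hq hr W
      induction q using Polynomial.induction_on' with
      | add p r hp hr => rw [map_add, mul_add, add_mul, hp, hr]
      | monomial k a =>
        have h2 : Commute X C := hC X hX
        rw [Polynomial.aeval_monomial, ← Algebra.smul_def, mul_smul_comm, smul_mul_assoc,
          (h2.pow_right k).eq]
    have hW : Invariant h W := by
      intro X hX x hx
      have h1 := congrArg (fun F : Module.End ℝ V => F x) (hcomm X hX)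
      simp only [Module.End.mul_apply] at h1
      rw [LinearMap.mem_ker] at hx ⊢
      rw [← h1, hx, map_zero]
    rcases hirr W hW with h0 | h1
    · exfalso
      have hr0 : Polynomial.aeval C r = 0 := by
        have h3 := minpoly.aeval ℝ C
        rw [hr, map_mul] at h3
        ext x
        have h4 := congrArg (fun F : Module.End ℝ V => F x) h3
        have : Polynomial.aeval C r x ∈ W := h4
        rw [h0, Submodule.mem_bot] at this
        exact this
      have hr1 : r ≠ 0 := by
        rintro rfl
        rw [mul_zero] at hr
        exact hmon.ne_zero hr
      have h5 := Polynomial.natDegree_le_natDegree (minpoly.degree_le_of_ne_zero ℝ C hr1 hr0)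
      rw [hr, Polynomial.natDegree_mul hq.ne_zero hr1] at h5
      have := hq.natDegree_pos
      omega
    · exact LinearMap.ker_eq_top.1 h1
  have hdeg := hq.natDegree_le_two
  have hpos := hq.natDegree_pos
  have haev : Polynomial.aeval C q = q.coeff 0 • 1 + q.coeff 1 • C + q.coeff 2 • (C * C) := by
    rw [Polynomial.aeval_eq_sum_range' (n := 3) (by omega)]
    simp [Finset.sum_range_succ, pow_two]
  rw [hq0] at haev
  by_cases h2 : q.coeff 2 = 0
  · left
    have h1 : q.coeff 1 ≠ 0 := by
      intro h1
      have : q.natDegree = 1 := by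
        by_contra hne
        have h3 : q.natDegree = 2 := by omega
        have := Polynomial.leadingCoeff_ne_zero.2 hq.ne_zero
        rw [Polynomial.leadingCoeff, h3] at this
        exact this h2
      have h4 := Polynomial.leadingCoeff_ne_zero.2 hq.ne_zero
      rw [Polynomial.leadingCoeff, this] at h4
      exact h4 h1
    refine ⟨- (q.coeff 0 / q.coeff 1), ?_⟩
    rw [h2] at haev
    have : q.coeff 1 • C = q.coeff 1 • (-(q.coeff 0 / q.coeff 1) • (1 : Module.End ℝ V)) := by
      rw [smul_smul]
      have : q.coeff 1 * -(q.coeff 0 / q.coeff 1) = - q.coeff 0 := by field_simp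
      rw [this, neg_smul, eq_neg_iff_add_eq_zero, add_comm]
      simpa using haev.symm
    exact smul_right_injective _ h1 this
  · set c0 := q.coeff 0 with hc0
    set c1 := q.coeff 1 with hc1
    set c2 := q.coeff 2 with hc2
    have hCC : C * C = - (c0 / c2) • 1 - (c1 / c2) • C := by
      apply smul_right_injective _ h2
      simp only
      rw [smul_sub, smul_smul, smul_smul]
      have e1 : c2 * -(c0 / c2) = - c0 := by field_simp
      have e2 : c2 * (c1 / c2) = c1 := by field_simp
      rw [e1, e2, ← sub_eq_zero, haev]
      module
    have hsq : (C - (-(c1 / c2) / 2) • 1) * (C - (-(c1 / c2) / 2) • 1)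
        = ((c1 / c2) ^ 2 / 4 - c0 / c2) • (1 : Module.End ℝ V) := by
      rw [mul_sub, sub_mul, sub_mul, hCC]
      simp only [smul_mul_assoc, mul_smul_comm, one_mul, mul_one]
      module
    have hneg : (c1 / c2) ^ 2 / 4 - c0 / c2 < 0 := by
      by_contra hge
      push Not at hge
      set s := Real.sqrt ((c1 / c2) ^ 2 / 4 - c0 / c2)
      have hs : s * s = (c1 / c2) ^ 2 / 4 - c0 / c2 := Real.mul_self_sqrt hge
      have hroot : q.IsRoot (-(c1 / c2) / 2 + s) := by
        rw [Polynomial.IsRoot, Polynomial.eval_eq_sum_range' (n := 3) (by omega)]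
        simp only [Finset.sum_range_succ, Finset.range_zero, Finset.sum_empty, pow_zero, pow_one,
          ← hc0, ← hc1, ← hc2, mul_one, zero_add]
        have : c2 * (s * s) = c1 ^ 2 / c2 / 4 - c0 := by rw [hs]; field_simp
        field_simp
        field_simp at this
        linear_combination this
      have hd := Polynomial.degree_eq_one_of_irreducible_of_root hq hroot
      have := Polynomial.coeff_eq_zero_of_degree_lt (p := q) (n := 2) (by rw [hd]; norm_num)
      exact h2 this
    right
    refine ⟨-(c1 / c2) / 2, Real.sqrt (-((c1 / c2) ^ 2 / 4 - c0 / c2)), ?_, ?_⟩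
    · exact (Real.sqrt_pos.2 (by linarith)).ne'
    · rw [hsq, Real.sq_sqrt (by linarith), neg_neg]

theorem exists_perp [FiniteDimensional ℝ V] (hd : 3 ≤ finrank ℝ V) (B : LinearMap.BilinForm ℝ V)
    (x y : V) : ∃ w, w ≠ 0 ∧ B x w = 0 ∧ B y w = 0 := by
  have h1 : LinearMap.ker ((B x).prod (B y)) ≠ ⊥ := by
    apply LinearMap.ker_ne_bot_of_finrank_lt
    simp
    omega
  obtain ⟨w, hw, hw0⟩ := Submodule.exists_mem_ne_zero_of_ne_bot h1
  rw [LinearMap.mem_ker, LinearMap.prod_apply] at hw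
  exact ⟨w, hw0, congrArg Prod.fst hw, congrArg Prod.snd hw⟩

/-- The trace form of a space of endomorphisms (with a minus sign). -/
def trForm (h : Submodule ℝ (Module.End ℝ V)) : LinearMap.BilinForm ℝ h :=
  LinearMap.mk₂ ℝ (fun S T => - LinearMap.trace ℝ V (S.1 * T.1))
    (fun x y z => by simp [add_mul]; ring)
    (fun c x y => by simp)
    (fun x y z => by simp [mul_add]; ring)
    (fun c x y => by simp)

theorem trForm_apply (h : Submodule ℝ (Module.End ℝ V)) (S T : h) :
    trForm h S T = - LinearMap.trace ℝ V (S.1 * T.1) := rfl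

/-- A space of skew operators with definite trace form is not irreducible. -/
theorem definite_false [FiniteDimensional ℝ V] (hd : 3 ≤ finrank ℝ V)
    {B : LinearMap.BilinForm ℝ V} {t : V} (L : Lor B t)
    (h : Submodule ℝ (Module.End ℝ V)) (hso : ∀ A ∈ h, A ∈ soSet B)
    (hlie : ∀ A ∈ h, ∀ A' ∈ h, A * A' - A' * A ∈ h)
    (hirr : Irred (h : Set (Module.End ℝ V)))
    (hdef : ∀ A ∈ h, A ≠ 0 → LinearMap.trace ℝ V (A * A) < 0) : False := by
  have : Nontrivial V := Module.nontrivial_of_finrank_pos (R := ℝ) (by omega)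
  have hsymm : ∀ x y, trForm h x y = trForm h y x := by
    intro x y
    rw [trForm_apply, trForm_apply, LinearMap.trace_mul_comm]
  obtain ⟨b, hb⟩ := exists_orthonormal (trForm h) hsymm (by
    intro x hx
    have := hdef x.1 x.2 (fun h => hx (Subtype.ext h))
    rw [trForm_apply]
    linarith)
  set C : Module.End ℝ V := ∑ i, (b i).1 * (b i).1 with hC
  have hcomm : ∀ X ∈ (h : Set (Module.End ℝ V)), X * C = C * X := by
    intro X hX
    let c : Fin (finrank ℝ h) → Fin (finrank ℝ h) → ℝ := fun i j =>
      trForm h ⟨X * (b i).1 - (b i).1 * X, hlie X hX _ (b i).2⟩ (b j)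
    have hexp : ∀ i, X * (b i).1 - (b i).1 * X = ∑ j, c i j • (b j).1 := by
      intro i
      let Y : h := ⟨X * (b i).1 - (b i).1 * X, hlie X hX _ (b i).2⟩
      have h1 : ∀ j, b.repr Y j = c i j := by
        intro j
        have h2 : trForm h Y (b j) = trForm h (∑ k, b.repr Y k • b k) (b j) := by
          rw [b.sum_repr]
        rw [map_sum, LinearMap.sum_apply] at h2
        simp only [map_smul, LinearMap.smul_apply, hb, smul_eq_mul, mul_ite, mul_one, mul_zero,
          Finset.sum_ite_eq', Finset.mem_univ, if_true] at h2
        exact h2.symm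
      have h3 := congrArg (fun Z : h => Z.1) (b.sum_repr Y)
      simp only [h1] at h3
      change Y.1 = _
      rw [← h3]
      simp
    have hanti : ∀ i j, c i j = - c j i := by
      intro i j
      simp only [c, trForm_apply]
      rw [trace_lie_inv, LinearMap.trace_mul_comm]
    have hsum : X * C - C * X = ∑ i, ∑ j, c i j • ((b j).1 * (b i).1 + (b i).1 * (b j).1) := by
      have : ∀ i, X * ((b i).1 * (b i).1) - (b i).1 * (b i).1 * X
          = ∑ j, c i j • ((b j).1 * (b i).1 + (b i).1 * (b j).1) := by
        intro i
        have e : X * ((b i).1 * (b i).1) - (b i).1 * (b i).1 * X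
          = (X * (b i).1 - (b i).1 * X) * (b i).1 + (b i).1 * (X * (b i).1 - (b i).1 * X) := by
          noncomm_ring
        rw [e, hexp, Finset.sum_mul, Finset.mul_sum, ← Finset.sum_add_distrib]
        refine Finset.sum_congr rfl fun j _ => ?_
        rw [smul_add, smul_mul_assoc, mul_smul_comm]
      rw [hC, Finset.mul_sum, Finset.sum_mul, ← Finset.sum_sub_distrib]
      exact Finset.sum_congr rfl fun i _ => this i
    have hneg : X * C - C * X = - (X * C - C * X) := by
      rw [hsum]
      conv_lhs => rw [Finset.sum_comm]
      rw [← Finset.sum_neg_distrib]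
      refine Finset.sum_congr rfl fun i _ => ?_
      rw [← Finset.sum_neg_distrib]
      refine Finset.sum_congr rfl fun j _ => ?_
      rw [hanti j i, neg_smul, add_comm]
    have h2 : (2 : ℝ) • (X * C - C * X) = 0 := by
      rw [two_smul]
      exact add_eq_zero_iff_eq_neg.2 hneg
    exact sub_eq_zero.1 ((smul_eq_zero.1 h2).resolve_left two_ne_zero)
  have hself : ∀ x y, B (C x) y = B x (C y) := by
    intro x y
    simp only [hC, LinearMap.sum_apply, map_sum, Module.End.mul_apply]
    refine Finset.sum_congr rfl fun i _ => ?_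
    rw [so_swap (hso _ (b i).2), so_swap (hso _ (b i).2), neg_neg]
  rcases schur _ hirr C hcomm with ⟨c, hc⟩ | ⟨a, β, hβ, hJ⟩
  · have hh : 0 < finrank ℝ h := by
      rw [Module.finrank_pos_iff]
      by_contra hnt
      rw [not_nontrivial_iff_subsingleton] at hnt
      obtain ⟨w, hw, hw1, -⟩ := exists_perp hd B t t
      have hinv : Invariant (h : Set (Module.End ℝ V)) (Submodule.span ℝ {w}) := by
        intro F hF x _
        have : (⟨F, hF⟩ : h) = 0 := Subsingleton.elim _ _
        have : F = 0 := congrArg Subtype.val this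
        rw [this]
        simp
      rcases hirr _ hinv with h0 | h1
      · rw [Submodule.span_singleton_eq_bot] at h0
        exact hw h0
      · have : t ∈ Submodule.span ℝ {w} := by rw [h1]; trivial
        obtain ⟨s, rfl⟩ := Submodule.mem_span_singleton.1 this
        have := L.neg
        have h2 := hw1
        simp only [map_smul, LinearMap.smul_apply, smul_eq_mul] at this h2
        rw [h2] at this
        simp at this
    have htr : LinearMap.trace ℝ V C = - (finrank ℝ h : ℝ) := by
      rw [hC, map_sum]
      have : ∀ i, LinearMap.trace ℝ V ((b i).1 * (b i).1) = -1 := by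
        intro i
        have := hb i i
        rw [trForm_apply, if_pos rfl] at this
        linarith
      simp [this]
    rw [hc, map_smul, LinearMap.trace_one, smul_eq_mul] at htr
    have hc0 : c < 0 := by
      by_contra hge
      push Not at hge
      have : (0:ℝ) < finrank ℝ h := by exact_mod_cast hh
      have h2 : 0 ≤ c * (finrank ℝ V : ℝ) := by positivity
      linarith
    have h1 : B (C t) t = - ∑ i, B ((b i).1 t) ((b i).1 t) := by
      simp only [hC, LinearMap.sum_apply, map_sum, Module.End.mul_apply]
      rw [← Finset.sum_neg_distrib]
      refine Finset.sum_congr rfl fun i _ => ?_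
      rw [so_swap (hso _ (b i).2)]
    have h2 : 0 ≤ ∑ i, B ((b i).1 t) ((b i).1 t) :=
      Finset.sum_nonneg fun i _ => L.nonneg (so_self L (hso _ (b i).2) t)
    rw [hc] at h1
    simp at h1
    nlinarith [L.neg]
  · set J := C - a • (1 : Module.End ℝ V) with hJd
    have hJs : ∀ x y, B (J x) y = B x (J y) := by
      intro x y
      simp [hJd, hself]
    have hJJ : ∀ x, J (J x) = - (β ^ 2) • x := by
      intro x
      have := congrArg (fun F : Module.End ℝ V => F x) hJ
      simpa using this
    obtain ⟨w, hw, hw1, hw2⟩ := exists_perp hd B t (J t)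
    have h1 := L.pos w hw1 hw
    have h2 := L.nonneg (w := J w) (by rw [← hJs]; exact hw2)
    rw [hJs, hJJ] at h2
    simp at h2
    nlinarith [sq_pos_of_ne_zero hβ, mul_pos (sq_pos_of_ne_zero hβ) h1]

theorem exists_hyp [FiniteDimensional ℝ V] (hd : 3 ≤ finrank ℝ V)
    {B : LinearMap.BilinForm ℝ V} {t : V} (L : Lor B t)
    (h : Submodule ℝ (Module.End ℝ V)) (hso : ∀ A ∈ h, A ∈ soSet B)
    (hlie : ∀ A ∈ h, ∀ A' ∈ h, A * A' - A' * A ∈ h)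
    (hirr : Irred (h : Set (Module.End ℝ V))) :
    ∃ A ∈ h, ∃ l : ℝ, l ≠ 0 ∧ ∃ w, w ≠ 0 ∧ A w = l • w := by
  by_contra hcon
  push Not at hcon
  have : Nontrivial V := Module.nontrivial_of_finrank_pos (R := ℝ) (by omega)
  have hT : ∀ A ∈ h, LinearMap.trace ℝ V (A * A) ≤ 0 ∧
      (LinearMap.trace ℝ V (A * A) = 0 → IsNilpotent A) := by
    intro A hA
    refine trace_sq L (hso A hA) fun l hl w hw => ?_
    by_contra hw0
    exact hcon A hA l hl w hw0 hw
  let n : Submodule ℝ (Module.End ℝ V) :=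
    { carrier := {A | A ∈ h ∧ ∀ C ∈ h, LinearMap.trace ℝ V (A * C) = 0}
      add_mem' := fun {x y} hx hy => ⟨h.add_mem hx.1 hy.1, fun C hC => by
        rw [add_mul, map_add, hx.2 C hC, hy.2 C hC, add_zero]⟩
      zero_mem' := ⟨h.zero_mem, fun C _ => by simp⟩
      smul_mem' := fun c x hx => ⟨h.smul_mem c hx.1, fun C hC => by
        rw [smul_mul_assoc, map_smul, hx.2 C hC, smul_zero]⟩ }
  have hn : n = ⊥ := by
    apply engel_zero h n hirr
    · intro X hX A hA
      refine ⟨hlie X hX A hA.1, fun C hC => ?_⟩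
      rw [trace_lie_inv, hA.2 _ (hlie X hX C hC), neg_zero]
    · exact fun A hA => hA.1
    · exact fun A hA => (hT A hA.1).2 (hA.2 A hA.1)
  apply definite_false hd L h hso hlie hirr
  intro A hA hA0
  refine lt_of_le_of_ne (hT A hA).1 fun h0 => hA0 ?_
  have : A ∈ n := by
    refine ⟨hA, fun C hC => ?_⟩
    have key : ∀ s : ℝ, LinearMap.trace ℝ V (C * C) + 2 * s * LinearMap.trace ℝ V (A * C) ≤ 0 := by
      intro s
      have h1 := (hT (C + s • A) (h.add_mem hC (h.smul_mem s hA))).1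
      simp only [add_mul, mul_add, smul_mul_assoc, mul_smul_comm, map_add, map_smul, smul_eq_mul,
        h0] at h1
      rw [LinearMap.trace_mul_comm ℝ C A] at h1
      linarith
    by_contra hne
    have := key ((1 - LinearMap.trace ℝ V (C * C)) / (2 * LinearMap.trace ℝ V (A * C)))
    field_simp at this
    linarith
  rw [hn] at this
  exact this

/-! ### Wedges and Witt pairs -/

theorem wedge_apply (B : LinearMap.BilinForm ℝ V) (X Y Z : V) :
    wedge B X Y Z = B X Z • Y - B Y Z • X := rfl

theorem wedge_so {B : LinearMap.BilinForm ℝ V} {t : V} (L : Lor B t) (X Y : V) :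
    wedge B X Y ∈ soSet B := by
  intro x y
  simp only [wedge_apply, map_sub, map_smul, LinearMap.sub_apply, LinearMap.smul_apply, smul_eq_mul]
  rw [L.symm x X, L.symm x Y]
  ring

theorem wedge_add_right (B : LinearMap.BilinForm ℝ V) (X Y Z : V) :
    wedge B X (Y + Z) = wedge B X Y + wedge B X Z := by
  ext z
  simp only [wedge_apply, LinearMap.add_apply, map_add]
  module

theorem wedge_smul_right (B : LinearMap.BilinForm ℝ V) (c : ℝ) (X Y : V) :
    wedge B X (c • Y) = c • wedge B X Y := by
  ext z
  simp only [wedge_apply, LinearMap.smul_apply, map_smul, smul_eq_mul]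
  module

theorem wedge_swap (B : LinearMap.BilinForm ℝ V) (X Y : V) :
    wedge B X Y = - wedge B Y X := by
  ext z
  simp only [wedge_apply, LinearMap.neg_apply]
  module

theorem lie_wedge {B : LinearMap.BilinForm ℝ V} {A : Module.End ℝ V} (hA : A ∈ soSet B) (X Y : V) :
    A * wedge B X Y - wedge B X Y * A = wedge B (A X) Y + wedge B X (A Y) := by
  ext z
  simp only [wedge_apply, LinearMap.add_apply, LinearMap.sub_apply, Module.End.mul_apply,
    map_sub, map_smul, so_swap hA]
  module

/-- `p, q` is a Witt pair. -/
structure Witt (B : LinearMap.BilinForm ℝ V) (p q : V) : Prop where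
  pp : B p p = 0
  qq : B q q = 0
  pq : B p q = 1
  qp : B q p = 1

theorem Witt.symm {B : LinearMap.BilinForm ℝ V} {p q : V} (H : Witt B p q) : Witt B q p :=
  ⟨H.qq, H.pp, H.qp, H.pq⟩

theorem Witt.pos {B : LinearMap.BilinForm ℝ V} {t p q : V} (L : Lor B t) (H : Witt B p q)
    {x : V} (hp : B p x = 0) (hq : B q x = 0) (hx : x ≠ 0) : 0 < B x x := by
  refine L.pos' (v := p - q) ?_ ?_ hx
  · simp [H.pp, H.qq, H.pq, H.qp]
  · simp [hp, hq]

/-- A vector orthogonal to `p` has non-negative square, zero only on the line of `p`. -/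
theorem Witt.perp {B : LinearMap.BilinForm ℝ V} {t p q : V} (L : Lor B t) (H : Witt B p q)
    {x : V} (hp : B p x = 0) : 0 ≤ B x x ∧ (B x x = 0 → x = B q x • p) := by
  have h1 : B (x - B q x • p) (x - B q x • p) = B x x := by
    simp [L.symm x p, hp, H.pp]
  have h2 : x - B q x • p ≠ 0 → 0 < B x x := by
    intro h
    rw [← h1]
    exact H.pos L (by simp [hp, H.pp]) (by simp [H.qp]) h
  by_cases h : x - B q x • p = 0
  · refine ⟨?_, fun _ => sub_eq_zero.1 h⟩
    rw [← h1, h]; simp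
  · exact ⟨(h2 h).le, fun h0 => absurd h0 (h2 h).ne'⟩

/-- The orthogonal projection to the complement of a Witt pair. -/
def proj (B : LinearMap.BilinForm ℝ V) (p q : V) : Module.End ℝ V :=
  LinearMap.id - (B q).smulRight p - (B p).smulRight q

theorem proj_apply (B : LinearMap.BilinForm ℝ V) (p q x : V) :
    proj B p q x = x - B q x • p - B p x • q := rfl

/-- The diagonal form used to isolate the `p ∧ x` part. -/
def diagForm (B : LinearMap.BilinForm ℝ V) (p q : V) (h : Submodule ℝ (Module.End ℝ V)) :
    LinearMap.BilinForm ℝ h :=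
  LinearMap.mk₂ ℝ (fun S T => B p (S.1 q) * B p (T.1 q) + B (S.1 p) (T.1 p)
      - LinearMap.trace ℝ V ((proj B p q * S.1 * proj B p q) * (proj B p q * T.1 * proj B p q)))
    (fun x y z => by simp [add_mul, mul_add]; ring)
    (fun c x y => by simp; ring)
    (fun x y z => by simp [add_mul, mul_add]; ring)
    (fun c x y => by simp; ring)

/-- The form measuring the `p ∧ x` part. -/
def upForm (B : LinearMap.BilinForm ℝ V) (q : V) (h : Submodule ℝ (Module.End ℝ V)) :
    LinearMap.BilinForm ℝ h :=
  LinearMap.mk₂ ℝ (fun S T => B (S.1 q) (T.1 q))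
    (fun x y z => by simp) (fun c x y => by simp) (fun x y z => by simp) (fun c x y => by simp)

/-- A nilpotent operator which is skew for `B` and has image in the complement of a Witt pair
is zero. -/
theorem nil_zero {B : LinearMap.BilinForm ℝ V} {t p q : V} (L : Lor B t) (H : Witt B p q)
    {K : Module.End ℝ V} (hK : K ∈ soSet B) (h1 : ∀ x, B p (K x) = 0) (h2 : ∀ x, B q (K x) = 0)
    (hn : IsNilpotent K) : K = 0 := by
  obtain ⟨m, hm⟩ := hn
  have step : ∀ k : ℕ, K ^ (k + 2) = 0 → K ^ (k + 1) = 0 := by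
    intro k hk
    ext x
    by_contra hx
    have e1 : (K ^ (k + 1)) x = K ((K ^ k) x) := by rw [pow_succ']; rfl
    have e2 : K ((K ^ (k + 1)) x) = 0 := by
      have : (K ^ (k + 2)) x = K ((K ^ (k + 1)) x) := by rw [pow_succ']; rfl
      rw [← this, hk]; rfl
    have := H.pos L (x := (K ^ (k + 1)) x) (by rw [e1, h1]) (by rw [e1, h2]) hx
    have h3 : B ((K ^ (k + 1)) x) ((K ^ (k + 1)) x) = 0 := by
      conv_lhs => rw [e1, so_swap hK, ← e1, e2]
      simp
    linarith
  have main : ∀ k : ℕ, K ^ (k + 1) = 0 → K = 0 := by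
    intro k
    induction k with
    | zero => intro h; simpa using h
    | succ k ih => exact fun h => ih (step k h)
  exact main m (by rw [pow_succ, hm, zero_mul])

theorem exists_up [FiniteDimensional ℝ V] {B : LinearMap.BilinForm ℝ V} {t p q : V} (L : Lor B t)
    (H : Witt B p q) (hd : 3 ≤ finrank ℝ V)
    (h : Submodule ℝ (Module.End ℝ V)) (hso : ∀ A ∈ h, A ∈ soSet B)
    (hlie : ∀ A ∈ h, ∀ A' ∈ h, A * A' - A' * A ∈ h)
    (hirr : Irred (h : Set (Module.End ℝ V))) {A : Module.End ℝ V} (hA : A ∈ h) {l : ℝ}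
    (hl : 0 < l) (hAp : A p = l • p) (hAq : A q = - l • q) :
    ∃ x, x ≠ 0 ∧ B p x = 0 ∧ B q x = 0 ∧ wedge B p x ∈ h := by
  by_contra hcon
  push Not at hcon
  have hAso := hso A hA
  set π := proj B p q with hπ
  have hp0 : p ≠ 0 := by
    rintro rfl
    have := H.pq
    simp at this
  have hq0 : q ≠ 0 := by
    rintro rfl
    have := H.pq
    simp at this
  have hBπ : ∀ x y, B (π x) y = B x (π y) := by
    intro x y
    simp only [hπ, proj_apply, map_sub, map_smul, LinearMap.sub_apply, LinearMap.smul_apply,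
      smul_eq_mul]
    rw [L.symm x p, L.symm x q]
    ring
  have hpπ : ∀ x, B p (π x) = 0 := by
    intro x
    simp [hπ, proj_apply, H.pp, H.pq]
  have hqπ : ∀ x, B q (π x) = 0 := by
    intro x
    simp [hπ, proj_apply, H.qq, H.qp]
  have hπid : ∀ x, B p x = 0 → B q x = 0 → π x = x := by
    intro x h1 h2
    simp [hπ, proj_apply, h1, h2]
  have hπA : π * A = A * π := by
    ext x
    simp only [hπ, Module.End.mul_apply, proj_apply, map_sub, map_smul, hAp, hAq]
    have e1 : B q (A x) = l * B q x := by
      have := so_swap hAso q x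
      rw [hAq] at this
      simp at this
      linarith
    have e2 : B p (A x) = - l * B p x := by
      have := so_swap hAso p x
      rw [hAp] at this
      simp at this
      linarith
    rw [e1, e2]
    module
  -- an element of `h` which moves the line of `q`
  obtain ⟨S₀, hS₀, hS₀q⟩ : ∃ S ∈ h, B (S q) (S q) ≠ 0 := by
    by_contra hc
    push Not at hc
    have hinv : Invariant (h : Set (Module.End ℝ V)) (Submodule.span ℝ {q}) := by
      intro F hF x hx
      obtain ⟨s, rfl⟩ := Submodule.mem_span_singleton.1 hx
      rw [map_smul]
      apply Submodule.smul_mem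
      have := (H.symm.perp L (x := F q) (so_self L (hso F hF) q)).2 (hc F hF)
      rw [this]
      exact Submodule.smul_mem _ _ (Submodule.mem_span_singleton_self q)
    rcases hirr _ hinv with h0 | h1
    · rw [Submodule.span_singleton_eq_bot] at h0
      exact hq0 h0
    · have : p ∈ Submodule.span ℝ {q} := by rw [h1]; trivial
      obtain ⟨s, hs⟩ := Submodule.mem_span_singleton.1 this
      have h2 := H.pq
      rw [← hs] at h2
      simp [H.qq] at h2
  have hK : ∀ S ∈ h, π * S * π ∈ soSet B := by
    intro S hS x y
    simp only [Module.End.mul_apply, hBπ, so_swap (hso S hS)]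
    rw [← hBπ x]
    ring
  have hKtr : ∀ S ∈ h, LinearMap.trace ℝ V ((π * S * π) * (π * S * π)) ≤ 0 ∧
      (LinearMap.trace ℝ V ((π * S * π) * (π * S * π)) = 0 → π * S * π = 0) := by
    intro S hS
    have := trace_sq L (hK S hS) (by
      intro μ hμ w hw
      by_contra hw0
      have e1 : w = μ⁻¹ • (π * S * π) w := by rw [hw, smul_smul, inv_mul_cancel₀ hμ, one_smul]
      have e2 : B p w = 0 := by
        rw [e1, map_smul]
        simp [hpπ]
      have e3 : B q w = 0 := by
        rw [e1, map_smul]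
        simp [hqπ]
      have e4 := H.pos L e2 e3 hw0
      have e5 := so_self L (hK S hS) w
      rw [hw] at e5
      simp [hμ] at e5
      linarith)
    exact ⟨this.1, fun h0 => nil_zero L H (hK S hS) (fun x => hpπ _) (fun x => hqπ _) (this.2 h0)⟩
  have hMdef : ∀ S : h, S ≠ 0 → 0 < diagForm B p q h S S := by
    intro S hS
    have hSso := hso S.1 S.2
    have e1 := H.perp L (x := S.1 p) (so_self L hSso p)
    have e2 := hKtr S.1 S.2
    have e3 : diagForm B p q h S S = B p (S.1 q) * B p (S.1 q) + B (S.1 p) (S.1 p)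
      - LinearMap.trace ℝ V ((π * S.1 * π) * (π * S.1 * π)) := rfl
    by_contra hle
    rw [e3] at hle
    push Not at hle
    have f1 : B p (S.1 q) = 0 := by nlinarith [mul_self_nonneg (B p (S.1 q))]
    have f2 : B (S.1 p) (S.1 p) = 0 := by nlinarith [mul_self_nonneg (B p (S.1 q)), e1.1, e2.1]
    have f3 := e2.2 (by nlinarith [mul_self_nonneg (B p (S.1 q)), e1.1, e2.1])
    have f4 : S.1 p = 0 := by
      rw [e1.2 f2]
      have : B q (S.1 p) = 0 := by
        have := so_swap hSso p q
        rw [f1, L.symm] at this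
        simpa using this
      rw [this, zero_smul]
    have f5 : S.1 = wedge B p (S.1 q) := by
      ext z
      have g1 := congrArg (fun F : Module.End ℝ V => F z) f3
      have hSπ : B p (S.1 (π z)) = 0 := by
        have := so_swap hSso p (π z)
        rw [f4] at this
        simp at this
        exact this
      have hSπ' : B q (S.1 (π z)) = - B (S.1 q) z := by
        have := so_swap hSso q (π z)
        have g2 : B (S.1 q) (π z) = B (S.1 q) z := by
          rw [← hBπ, hπid _ f1 (so_self L hSso q)]
        linarith
      simp only [Module.End.mul_apply, LinearMap.zero_apply] at g1
      rw [hπ, proj_apply, ← hπ, hSπ, hSπ'] at g1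
      have g2 : S.1 (π z) = S.1 z - B p z • S.1 q := by
        rw [hπ, proj_apply]
        simp [f4]
      rw [g2] at g1
      rw [wedge_apply, ← sub_eq_zero, ← g1]
      module
    by_cases hx : S.1 q = 0
    · apply hS
      apply Subtype.ext
      rw [f5, hx]
      ext z
      simp [wedge_apply]
    · exact hcon _ hx f1 (so_self L hSso q) (f5 ▸ S.2)
  obtain ⟨S, hS0, s, hs, hS⟩ := exists_eig (diagForm B p q h) (upForm B q h)
    (by
      intro x y
      change B p (x.1 q) * B p (y.1 q) + B (x.1 p) (y.1 p) - LinearMap.trace ℝ V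
        ((π * x.1 * π) * (π * y.1 * π)) = B p (y.1 q) * B p (x.1 q) + B (y.1 p) (x.1 p)
        - LinearMap.trace ℝ V ((π * y.1 * π) * (π * x.1 * π))
      rw [L.symm (x.1 p), LinearMap.trace_mul_comm, mul_comm (B p (x.1 q))])
    hMdef (fun x y => L.symm _ _) ⟨⟨S₀, hS₀⟩, ⟨S₀, hS₀⟩, hS₀q⟩
  have hSso := hso S.1 S.2
  have k1 := hS S
  have k2 := hS ⟨A * S.1 - S.1 * A, hlie A hA _ S.2⟩
  have k3 := hMdef S hS0
  have k4 : 0 ≤ upForm B q h S S := (H.symm.perp L (so_self L hSso q)).1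
  have k5 : upForm B q h S ⟨A * S.1 - S.1 * A, hlie A hA _ S.2⟩ = l * upForm B q h S S := by
    change B (S.1 q) ((A * S.1 - S.1 * A) q) = l * B (S.1 q) (S.1 q)
    simp [hAq, so_self L hAso]
  have k6 : diagForm B p q h S ⟨A * S.1 - S.1 * A, hlie A hA _ S.2⟩ = - l * B (S.1 p) (S.1 p) := by
    change B p (S.1 q) * B p ((A * S.1 - S.1 * A) q) + B (S.1 p) ((A * S.1 - S.1 * A) p)
      - LinearMap.trace ℝ V ((π * S.1 * π) * (π * (A * S.1 - S.1 * A) * π))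
      = - l * B (S.1 p) (S.1 p)
    have m1 : B p ((A * S.1 - S.1 * A) q) = 0 := by
      have := so_swap hAso p (S.1 q)
      rw [hAp] at this
      simp at this
      simp [hAq]
      linarith
    have m2 : B (S.1 p) ((A * S.1 - S.1 * A) p) = - l * B (S.1 p) (S.1 p) := by
      simp [hAp, so_self L hAso]
    have m3 : π * (A * S.1 - S.1 * A) * π = A * (π * S.1 * π) - (π * S.1 * π) * A := by
      calc π * (A * S.1 - S.1 * A) * π = (π * A) * S.1 * π - π * S.1 * (A * π) := by noncomm_ring
        _ = (A * π) * S.1 * π - π * S.1 * (π * A) := by rw [hπA]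
        _ = _ := by noncomm_ring
    have m4 : ∀ K : Module.End ℝ V, LinearMap.trace ℝ V (K * (A * K - K * A)) = 0 := by
      intro K
      rw [mul_sub, map_sub, ← mul_assoc, ← mul_assoc, LinearMap.trace_mul_comm ℝ (K * A) K,
        mul_assoc, sub_self]
    rw [m1, m2, m3, m4]
    ring
  have k7 := (H.perp L (so_self L hSso p)).1
  rw [k5, k6] at k2
  have hs0 : 0 < s := by
    rcases lt_or_gt_of_ne hs with h1 | h1
    · nlinarith [mul_pos (neg_pos.2 h1) k3]
    · exact h1
  have k8 : 0 < upForm B q h S S := by rw [k1]; positivity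
  have k9 : 0 < l * upForm B q h S S := by positivity
  have k10 : 0 ≤ s * (l * B (S.1 p) (S.1 p)) := by positivity
  linarith

/-! ### Generation by the two nilpotent parts -/

theorem exists_witt [FiniteDimensional ℝ V] {B : LinearMap.BilinForm ℝ V} {t : V} (L : Lor B t)
    {A : Module.End ℝ V} (hA : A ∈ soSet B) {l : ℝ} (hl : l ≠ 0) {w : V} (hw : w ≠ 0)
    (hAw : A w = l • w) : ∃ q, Witt B w q ∧ A q = - l • q := by
  have hww : B w w = 0 := by
    have := so_self L hA w
    rw [hAw] at this
    simpa [hl] using this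
  obtain ⟨y, hy, hAy⟩ : ∃ y, y ≠ 0 ∧ A y = - l • y := by
    by_contra hcon
    push Not at hcon
    have hinj : Function.Injective (A + l • (1 : Module.End ℝ V)) := by
      rw [injective_iff_map_eq_zero]
      intro y hy
      by_contra hy0
      apply hcon y hy0
      simp at hy
      rw [neg_smul]
      exact eq_neg_of_add_eq_zero_left hy
    have hsurj := LinearMap.injective_iff_surjective.1 hinj
    apply hw
    apply L.nondeg
    intro z
    obtain ⟨x, rfl⟩ := hsurj z
    have := so_swap hA w x
    rw [hAw] at this
    simp at this ⊢
    linarith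
  have hyy : B y y = 0 := by
    have := so_self L hA y
    rw [hAy] at this
    simpa [hl] using this
  have hwy : B w y ≠ 0 := by
    intro h0
    obtain ⟨c, hc⟩ := L.null hww hyy h0 hw
    have h1 : A y = l • y := by rw [hc, map_smul, hAw, smul_comm]
    rw [h1] at hAy
    have h2 : (2 * l) • y = 0 := by
      have : (2 * l) • y = l • y - (- l • y) := by module
      rw [this, hAy, sub_self]
    rcases smul_eq_zero.1 h2 with h3 | h3
    · apply hl; linarith
    · exact hy h3
  refine ⟨(B w y)⁻¹ • y, ⟨hww, by simp [hyy], by simp [hwy], ?_⟩, ?_⟩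
  · rw [L.symm]; simp [hwy]
  · rw [map_smul, hAy, smul_comm]

theorem wedge_add_left (B : LinearMap.BilinForm ℝ V) (X Y Z : V) :
    wedge B (X + Y) Z = wedge B X Z + wedge B Y Z := by
  ext z
  simp only [wedge_apply, LinearMap.add_apply, map_add]
  module

theorem wedge_smul_left (B : LinearMap.BilinForm ℝ V) (c : ℝ) (X Y : V) :
    wedge B (c • X) Y = c • wedge B X Y := by
  ext z
  simp only [wedge_apply, LinearMap.smul_apply, map_smul, smul_eq_mul]
  module

theorem lie_pq {B : LinearMap.BilinForm ℝ V} {t p q : V} (L : Lor B t) (H : Witt B p q) {x y : V}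
    (hpx : B p x = 0) (hqx : B q x = 0) (hpy : B p y = 0) (hqy : B q y = 0) :
    wedge B p x * wedge B q y - wedge B q y * wedge B p x
      = wedge B x y + B x y • wedge B p q := by
  rw [lie_wedge (wedge_so L p x)]
  have e1 : wedge B p x q = x := by simp [wedge_apply, H.pq, L.symm x q, hqx]
  have e2 : wedge B p x y = (- B x y) • p := by simp [wedge_apply, hpy]
  rw [e1, e2, wedge_smul_right, wedge_swap B q p]
  module

theorem transfer {B : LinearMap.BilinForm ℝ V} {t p q : V} (L : Lor B t) (H : Witt B p q)
    (h : Submodule ℝ (Module.End ℝ V))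
    (hlie : ∀ A ∈ h, ∀ A' ∈ h, A * A' - A' * A ∈ h) {x y : V} (hx : x ≠ 0)
    (hpx : B p x = 0) (hqx : B q x = 0) (hpy : B p y = 0) (hqy : B q y = 0)
    (h1 : wedge B p x ∈ h) (h2 : wedge B q y ∈ h) : wedge B p y ∈ h := by
  have h3 := hlie _ h1 _ h2
  have h4 := hlie _ h3 _ h1
  have hxx := H.pos L hpx hqx hx
  rw [lie_wedge (by
    rw [lie_pq L H hpx hqx hpy hqy]
    intro u v
    have e1 := wedge_so L x y u v
    have e2 := wedge_so L p q u v
    simp only [LinearMap.add_apply, LinearMap.smul_apply, map_add, map_smul, smul_eq_mul]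
    linear_combination e1 + B x y * e2), lie_pq L H hpx hqx hpy hqy] at h4
  have e1 : (wedge B x y + B x y • wedge B p q) p = (- B x y) • p := by
    simp [wedge_apply, H.pp, H.qp, L.symm x p, L.symm y p, hpx, hpy]
  have e2 : (wedge B x y + B x y • wedge B p q) x = B x x • y - B x y • x := by
    simp [wedge_apply, hpx, hqx, L.symm y x]
  rw [e1, e2, wedge_smul_left, sub_eq_add_neg, ← neg_smul, wedge_add_right, wedge_smul_right,
    wedge_smul_right] at h4
  have h5 : wedge B p y = (B x x)⁻¹ • ((- B x y • wedge B p x + (B x x • wedge B p y +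
      - B x y • wedge B p x)) + (2 * B x y) • wedge B p x) := by
    have : (- B x y • wedge B p x + (B x x • wedge B p y +
      - B x y • wedge B p x)) + (2 * B x y) • wedge B p x = B x x • wedge B p y := by module
    rw [this, smul_smul, inv_mul_cancel₀ hxx.ne', one_smul]
  rw [h5]
  exact h.smul_mem _ (h.add_mem h4 (h.smul_mem _ h1))

theorem pq_mem {B : LinearMap.BilinForm ℝ V} {t p q : V} (L : Lor B t) (H : Witt B p q)
    (h : Submodule ℝ (Module.End ℝ V))
    (hlie : ∀ A ∈ h, ∀ A' ∈ h, A * A' - A' * A ∈ h) {x : V} (hx : x ≠ 0)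
    (hpx : B p x = 0) (hqx : B q x = 0)
    (h1 : wedge B p x ∈ h) (h2 : wedge B q x ∈ h) : wedge B p q ∈ h := by
  have h3 := hlie _ h1 _ h2
  have hxx := H.pos L hpx hqx hx
  rw [lie_pq L H hpx hqx hpx hqx] at h3
  have e : wedge B x x = 0 := by ext z; simp [wedge_apply]
  rw [e, zero_add] at h3
  have := h.smul_mem (B x x)⁻¹ h3
  rwa [smul_smul, inv_mul_cancel₀ hxx.ne', one_smul] at this

theorem lie_P {B : LinearMap.BilinForm ℝ V} {t p q : V} (L : Lor B t) (H : Witt B p q) {x : V}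
    (hpx : B p x = 0) (hqx : B q x = 0) :
    wedge B p q * wedge B p x - wedge B p x * wedge B p q = - wedge B p x ∧
    wedge B p q * wedge B q x - wedge B q x * wedge B p q = wedge B q x := by
  have e1 : wedge B p q p = (-1 : ℝ) • p := by simp [wedge_apply, H.pp, H.qp]
  have e2 : wedge B p q q = q := by simp [wedge_apply, H.qq, H.pq]
  have e3 : wedge B p q x = (0 : ℝ) • x := by simp [wedge_apply, hpx, hqx]
  constructor
  · rw [lie_wedge (wedge_so L p q), e1, e3, wedge_smul_left, wedge_smul_right]
    module
  · rw [lie_wedge (wedge_so L p q), e2, e3, wedge_smul_right]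
    module

theorem comp_mem {B : LinearMap.BilinForm ℝ V} {t p q : V} (L : Lor B t) (H : Witt B p q)
    (h : Submodule ℝ (Module.End ℝ V)) (hso : ∀ A ∈ h, A ∈ soSet B)
    (hlie : ∀ A ∈ h, ∀ A' ∈ h, A * A' - A' * A ∈ h) (hP : wedge B p q ∈ h)
    {S : Module.End ℝ V} (hS : S ∈ h) :
    wedge B p (proj B p q (S q)) ∈ h ∧ wedge B q (proj B p q (S p)) ∈ h := by
  have hSso := hso S hS
  set x := proj B p q (S q) with hx
  set y := proj B p q (S p) with hy
  have hp : ∀ z, B p (proj B p q z) = 0 := by intro z; simp [proj_apply, H.pp, H.pq]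
  have hq : ∀ z, B q (proj B p q z) = 0 := by intro z; simp [proj_apply, H.qq, H.qp]
  have h1 := hlie S hS _ hP
  rw [lie_wedge hSso] at h1
  have e1 : S p = y + B q (S p) • p := by
    rw [hy, proj_apply, so_self L hSso p]; module
  have e2 : S q = x + (- B q (S p)) • q := by
    have := so_swap hSso p q
    rw [L.symm] at this
    rw [hx, proj_apply, so_self L hSso q, this]; module
  have e3 : wedge B (S p) q + wedge B p (S q) = wedge B p x - wedge B q y := by
    generalize B q (S p) = a at e1 e2
    rw [e2, e1, wedge_add_right, wedge_smul_right, wedge_add_left, wedge_smul_left,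
      wedge_swap B y q]
    module
  rw [e3] at h1
  have h2 := hlie _ hP _ h1
  have e4 : wedge B p q * (wedge B p x - wedge B q y) - (wedge B p x - wedge B q y) * wedge B p q
      = - wedge B p x - wedge B q y := by
    have f1 := (lie_P L H (hp (S q)) (hq (S q))).1
    have f2 := (lie_P L H (hp (S p)) (hq (S p))).2
    rw [← hx] at f1
    rw [← hy] at f2
    conv_rhs => rw [← f1, ← f2]
    noncomm_ring
  rw [e4] at h2
  constructor
  · have : wedge B p x = (1 / 2 : ℝ) • ((wedge B p x - wedge B q y) -
      (- wedge B p x - wedge B q y)) := by module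
    rw [this]
    exact h.smul_mem _ (h.sub_mem h1 h2)
  · have : wedge B q y = (-1 / 2 : ℝ) • ((wedge B p x - wedge B q y) +
      (- wedge B p x - wedge B q y)) := by module
    rw [this]
    exact h.smul_mem _ (h.add_mem h1 h2)

theorem all_up [FiniteDimensional ℝ V] (hd : 3 ≤ finrank ℝ V)
    {B : LinearMap.BilinForm ℝ V} {t : V} (L : Lor B t)
    (h : Submodule ℝ (Module.End ℝ V)) (hso : ∀ A ∈ h, A ∈ soSet B)
    (hlie : ∀ A ∈ h, ∀ A' ∈ h, A * A' - A' * A ∈ h)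
    (hirr : Irred (h : Set (Module.End ℝ V))) :
    ∃ p q, Witt B p q ∧ wedge B p q ∈ h ∧ (∃ x, x ≠ 0 ∧ B p x = 0 ∧ B q x = 0) ∧
      ∀ x, B p x = 0 → B q x = 0 → wedge B p x ∈ h ∧ wedge B q x ∈ h := by
  obtain ⟨A, hA, l, hl, hl0, p, q, H, hAp, hAq⟩ : ∃ A ∈ h, ∃ l : ℝ, l ≠ 0 ∧ 0 < l ∧ ∃ p q,
      Witt B p q ∧ A p = l • p ∧ A q = - l • q := by
    obtain ⟨A, hA, l, hl, w, hw, hAw⟩ := exists_hyp hd L h hso hlie hirr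
    obtain ⟨q, H, hq⟩ := exists_witt L (hso A hA) hl hw hAw
    rcases lt_or_gt_of_ne hl with h1 | h1
    · exact ⟨A, hA, -l, neg_ne_zero.2 hl, by linarith, q, w, H.symm, hq, by rw [neg_neg, hAw]⟩
    · exact ⟨A, hA, l, hl, h1, w, q, H, hAw, hq⟩
  obtain ⟨x, hx, hpx, hqx, hxm⟩ := exists_up L H hd h hso hlie hirr hA hl0 hAp hAq
  obtain ⟨y, hy, hqy, hpy, hym⟩ := exists_up L H.symm hd h hso hlie hirr (h.neg_mem hA) hl0
    (by rw [LinearMap.neg_apply, hAq]; module) (by rw [LinearMap.neg_apply, hAp]; module)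
  have hpq : ∀ z, B p z = 0 → B q z = 0 → wedge B q z ∈ h → wedge B p z ∈ h :=
    fun z h1 h2 h3 => transfer L H h hlie hx hpx hqx h1 h2 hxm h3
  have hqp : ∀ z, B p z = 0 → B q z = 0 → wedge B p z ∈ h → wedge B q z ∈ h :=
    fun z h1 h2 h3 => transfer L H.symm h hlie hy hqy hpy h2 h1 hym h3
  have hP : wedge B p q ∈ h := pq_mem L H h hlie hx hpx hqx hxm (hqp x hpx hqx hxm)
  have hp : ∀ z, B p (proj B p q z) = 0 := by intro z; simp [proj_apply, H.pp, H.pq]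
  have hq : ∀ z, B q (proj B p q z) = 0 := by intro z; simp [proj_apply, H.qq, H.qp]
  let W : Submodule ℝ V :=
    { carrier := {v | wedge B p (proj B p q v) ∈ h}
      add_mem' := fun {x y} hx hy => by
        change wedge B p (proj B p q (x + y)) ∈ h
        rw [map_add, wedge_add_right]
        exact h.add_mem hx hy
      zero_mem' := by
        have : wedge B p (proj B p q 0) = 0 := by ext z; simp [wedge_apply]
        change wedge B p (proj B p q 0) ∈ h
        rw [this]
        exact h.zero_mem
      smul_mem' := fun c x hx => by
        change wedge B p (proj B p q (c • x)) ∈ h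
        rw [map_smul, wedge_smul_right]
        exact h.smul_mem _ hx }
  have hpW : p ∈ W := by
    have : proj B p q p = 0 := by simp [proj_apply, H.pp, H.qp]
    change wedge B p (proj B p q p) ∈ h
    have e : wedge B p (proj B p q p) = 0 := by rw [this]; ext z; simp [wedge_apply]
    rw [e]
    exact h.zero_mem
  have hSq : ∀ S ∈ h, S q ∈ W := fun S hS => (comp_mem L H h hso hlie hP hS).1
  have hSp : ∀ S ∈ h, S p ∈ W := fun S hS =>
    hpq _ (hp _) (hq _) (comp_mem L H h hso hlie hP hS).2
  have hinv : Invariant (h : Set (Module.End ℝ V)) W := by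
    intro S hS v hv
    have hz : wedge B p (proj B p q v) ∈ h := hv
    set z := proj B p q v with hzd
    have hzW : z ∈ W := by
      have : proj B p q z = z := by rw [proj_apply, hp, hq]; simp
      change wedge B p (proj B p q z) ∈ h
      rwa [this]
    have h1 := hSq _ (hlie S hS _ hz)
    have e1 : (S * wedge B p z - wedge B p z * S) q
        = S z - (B p (S q) • z - B z (S q) • p) := by
      have hqz : B q z = 0 := hq v
      simp [wedge_apply, H.pq, L.symm z q, hqz]
    rw [e1] at h1
    have h2 : S z ∈ W := by
      have := W.add_mem h1 (W.sub_mem (W.smul_mem (B p (S q)) hzW) (W.smul_mem (B z (S q)) hpW))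
      simpa using this
    have e2 : S v = S z + B q v • S p + B p v • S q := by
      rw [hzd, proj_apply, map_sub, map_sub, map_smul, map_smul]
      module
    rw [e2]
    exact W.add_mem (W.add_mem h2 (W.smul_mem _ (hSp S hS))) (W.smul_mem _ (hSq S hS))
  have hW : W = ⊤ := by
    rcases hirr W hinv with h0 | h0
    · rw [h0] at hpW
      have : p = 0 := hpW
      have h1 := H.pq
      rw [this] at h1
      simp at h1
    · exact h0
  refine ⟨p, q, H, hP, ⟨x, hx, hpx, hqx⟩, fun z h1 h2 => ?_⟩
  have hz : z ∈ W := by rw [hW]; trivial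
  have hz' : wedge B p (proj B p q z) ∈ h := hz
  have e : proj B p q z = z := by rw [proj_apply, h1, h2]; simp
  rw [e] at hz'
  exact ⟨hz', hqp z h1 h2 hz'⟩

theorem wedge_all {B : LinearMap.BilinForm ℝ V} {t p q : V} (L : Lor B t) (H : Witt B p q)
    (g : Submodule ℝ (Module.End ℝ V))
    (hlie : ∀ A ∈ g, ∀ A' ∈ g, A * A' - A' * A ∈ g) {x : V} (hx : x ≠ 0)
    (hpx : B p x = 0) (hqx : B q x = 0)
    (hg : ∀ x, B p x = 0 → B q x = 0 → wedge B p x ∈ g ∧ wedge B q x ∈ g) (X Y : V) :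
    wedge B X Y ∈ g := by
  have hP : wedge B p q ∈ g := pq_mem L H g hlie hx hpx hqx (hg x hpx hqx).1 (hg x hpx hqx).2
  have hE : ∀ u v, B p u = 0 → B q u = 0 → B p v = 0 → B q v = 0 → wedge B u v ∈ g := by
    intro u v h1 h2 h3 h4
    have := hlie _ (hg u h1 h2).1 _ (hg v h3 h4).2
    rw [lie_pq L H h1 h2 h3 h4] at this
    simpa using g.sub_mem this (g.smul_mem (B u v) hP)
  have hp : ∀ z, B p (proj B p q z) = 0 := by intro z; simp [proj_apply, H.pp, H.pq]
  have hq : ∀ z, B q (proj B p q z) = 0 := by intro z; simp [proj_apply, H.qq, H.qp]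
  have hdec : ∀ Z, Z = B q Z • p + B p Z • q + proj B p q Z := by
    intro Z
    rw [proj_apply]
    module
  have hself : ∀ Z, wedge B Z Z ∈ g := by
    intro Z
    have : wedge B Z Z = 0 := by ext z; simp [wedge_apply]
    rw [this]; exact g.zero_mem
  have hl : ∀ Z Y, wedge B p Y ∈ g → wedge B q Y ∈ g → wedge B (proj B p q Z) Y ∈ g →
      wedge B Z Y ∈ g := by
    intro Z Y h1 h2 h3
    rw [hdec Z, wedge_add_left, wedge_add_left, wedge_smul_left, wedge_smul_left]
    exact g.add_mem (g.add_mem (g.smul_mem _ h1) (g.smul_mem _ h2)) h3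
  have hsw : ∀ Z Y, wedge B Z Y ∈ g → wedge B Y Z ∈ g := by
    intro Z Y h1
    rw [wedge_swap]
    exact g.neg_mem h1
  apply hl
  · apply hsw
    apply hl
    · exact hself p
    · exact hsw _ _ hP
    · exact hsw _ _ (hg _ (hp _) (hq _)).1
  · apply hsw
    apply hl
    · exact hP
    · exact hself q
    · exact hsw _ _ (hg _ (hp _) (hq _)).2
  · apply hsw
    apply hl
    · exact (hg _ (hp _) (hq _)).1
    · exact (hg _ (hp _) (hq _)).2
    · exact hE _ _ (hp _) (hq _) (hp _) (hq _)

theorem so_of_wedge [FiniteDimensional ℝ V] {B : LinearMap.BilinForm ℝ V} {t : V} (L : Lor B t)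
    (g : Submodule ℝ (Module.End ℝ V)) (hg : ∀ X Y, wedge B X Y ∈ g) {S : Module.End ℝ V}
    (hS : S ∈ soSet B) : S ∈ g := by
  classical
  have hB : B.Nondegenerate := by
    constructor
    · intro x hx
      exact L.nondeg hx
    · intro x hx
      exact L.nondeg fun y => by rw [L.symm]; exact hx y
  let b := Module.finBasis ℝ V
  let d := B.dualBasis hB b
  have h1 : ∀ Z, ∑ i, B Z (b i) • d i = Z := by
    intro Z
    have := d.sum_repr Z
    simpa [d, LinearMap.BilinForm.dualBasis_repr_apply] using this
  have h2 : ∀ Z, ∑ i, B (d i) Z • b i = Z := by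
    intro Z
    have h3 : ∀ i, B (d i) Z = b.repr Z i := by
      intro i
      conv_lhs => rw [← b.sum_repr Z]
      simp only [map_sum, map_smul, d, LinearMap.BilinForm.apply_dualBasis_left, smul_eq_mul,
        mul_ite, mul_one, mul_zero, Finset.sum_ite_eq', Finset.sum_ite_eq, Finset.mem_univ, if_true]
    simp only [h3]
    exact b.sum_repr Z
  have h3 : S = (1 / 2 : ℝ) • ∑ i, wedge B (d i) (S (b i)) := by
    ext Z
    have e1 : ∑ i, B (d i) Z • S (b i) = S Z := by
      conv_rhs => rw [← h2 Z]
      simp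
    have e2 : ∑ i, B (S (b i)) Z • d i = - S Z := by
      conv_rhs => rw [← h1 (S Z)]
      rw [← Finset.sum_neg_distrib]
      refine Finset.sum_congr rfl fun i _ => ?_
      rw [so_swap hS, L.symm, neg_smul]
    simp only [LinearMap.smul_apply, LinearMap.sum_apply, wedge_apply, Finset.sum_sub_distrib, e1,
      e2]
    module
  rw [h3]
  exact g.smul_mem _ (g.sum_mem fun i _ => hg _ _)

/-- The abstract version of the theorem. -/
theorem main_abstract [FiniteDimensional ℝ V] (hd : 3 ≤ finrank ℝ V)
    {B : LinearMap.BilinForm ℝ V} {t : V} (L : Lor B t) (g : Set (Module.End ℝ V))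
    (hsub : IsLieSub g) (hg : g ⊆ coSet B) (hirr : Irred g) (hnot : ¬ g ⊆ soSet B) :
    g = coSet B := by
  obtain ⟨g0, gadd, gsmul, glie⟩ := hsub
  let G : Submodule ℝ (Module.End ℝ V) :=
    { carrier := g
      add_mem' := fun {x y} hx hy => gadd x hx y hy
      zero_mem' := g0
      smul_mem' := fun c x hx => gsmul c x hx }
  let h : Submodule ℝ (Module.End ℝ V) :=
    { carrier := {S | S ∈ soSet B ∧ ∃ c : ℝ, c • (1 : Module.End ℝ V) + S ∈ g}
      add_mem' := by
        rintro S T ⟨hS, c, hc⟩ ⟨hT, d, hd⟩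
        refine ⟨fun x y => ?_, c + d, ?_⟩
        · have e1 := hS x y
          have e2 := hT x y
          simp only [LinearMap.add_apply, map_add]
          linarith
        · have : (c + d) • (1 : Module.End ℝ V) + (S + T) = (c • 1 + S) + (d • 1 + T) := by module
          rw [this]
          exact gadd _ hc _ hd
      zero_mem' := ⟨fun x y => by simp, 0, by simpa using g0⟩
      smul_mem' := by
        rintro s S ⟨hS, c, hc⟩
        refine ⟨fun x y => ?_, s * c, ?_⟩
        · have e1 := hS x y
          simp only [LinearMap.smul_apply, map_smul, smul_eq_mul]
          linear_combination s * e1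
        · have : (s * c) • (1 : Module.End ℝ V) + s • S = s • (c • 1 + S) := by module
          rw [this]
          exact gsmul _ _ hc }
  have hso : ∀ S ∈ h, S ∈ soSet B := fun S hS => hS.1
  have hbr : ∀ S ∈ h, ∀ T ∈ h, S * T - T * S ∈ g := by
    rintro S ⟨hS, c, hc⟩ T ⟨hT, d, hd⟩
    have e : S * T - T * S = (c • 1 + S) * (d • 1 + T) - (d • 1 + T) * (c • 1 + S) := by
      simp only [add_mul, mul_add, smul_mul_assoc, mul_smul_comm, one_mul, mul_one]
      module
    rw [e]
    exact glie _ hc _ hd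
  have hlie : ∀ S ∈ h, ∀ T ∈ h, S * T - T * S ∈ h := by
    intro S hS T hT
    refine ⟨fun x y => ?_, 0, by simpa using hbr S hS T hT⟩
    simp only [LinearMap.sub_apply, Module.End.mul_apply, map_sub, so_swap hS.1, so_swap hT.1]
    ring
  have hirr' : Irred (h : Set (Module.End ℝ V)) := by
    intro W hW
    apply hirr W
    intro F hF x hx
    obtain ⟨c, S, hS, rfl⟩ := hg hF
    have := hW S ⟨hS, c, hF⟩ x hx
    simpa using W.add_mem (W.smul_mem c hx) this
  obtain ⟨p, q, H, hP, ⟨x, hx, hpx, hqx⟩, hall⟩ := all_up hd L h hso hlie hirr'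
  have hw : ∀ X Y, wedge B X Y ∈ G := by
    refine wedge_all L H G (fun A hA A' hA' => glie A hA A' hA') hx hpx hqx ?_
    intro z h1 h2
    have e := lie_P L H h1 h2
    have k1 := hbr _ hP _ (hall z h1 h2).1
    have k2 := hbr _ hP _ (hall z h1 h2).2
    rw [e.1] at k1
    rw [e.2] at k2
    refine ⟨?_, k2⟩
    have : - wedge B p z ∈ G := k1
    simpa using this
  have hsoG : ∀ S ∈ soSet B, S ∈ G := fun S hS => so_of_wedge L G hw hS
  have h1 : (1 : Module.End ℝ V) ∈ G := by
    obtain ⟨F, hF, hFn⟩ := Set.not_subset.1 hnot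
    obtain ⟨c, S, hS, rfl⟩ := hg hF
    have hc : c ≠ 0 := by
      rintro rfl
      apply hFn
      simpa using hS
    have h2 : c • (1 : Module.End ℝ V) ∈ G := by
      have : c • (1 : Module.End ℝ V) + S ∈ G := hF
      simpa using G.sub_mem this (hsoG S hS)
    have := G.smul_mem c⁻¹ h2
    rwa [smul_smul, inv_mul_cancel₀ hc, one_smul] at this
  apply Set.Subset.antisymm hg
  rintro F ⟨c, S, hS, rfl⟩
  exact G.add_mem (G.smul_mem c h1) (hsoG S hS)

theorem minkB_apply (n : ℕ) (X Y : Mink n) :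
    minkB n X Y = X.1 * Y.2.2 + X.2.2 * Y.1 + ∑ i, X.2.1 i * Y.2.1 i := rfl

theorem mink_lor (n : ℕ) : Lor (minkB n) (((1 : ℝ), (0 : Fin n → ℝ), (-1 : ℝ)) : Mink n) := by
  refine ⟨?_, ?_, ?_⟩
  · intro x y
    simp only [minkB_apply]
    simp only [mul_comm (x.2.1 _)]
    ring
  · simp only [minkB_apply]
    simp
  · rintro ⟨a, y, b⟩ h0 hw
    simp only [minkB_apply] at h0 ⊢
    simp at h0
    have hab : b = a := by linarith
    subst hab
    have hs : 0 ≤ ∑ i, y i * y i := Finset.sum_nonneg fun i _ => mul_self_nonneg _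
    rcases eq_or_ne b 0 with hb | hb
    · subst hb
      simp only [mul_zero, zero_add]
      refine lt_of_le_of_ne hs fun h1 => hw ?_
      have h2 := (Finset.sum_eq_zero_iff_of_nonneg fun i _ => mul_self_nonneg (y i)).1 h1.symm
      have : y = 0 := by
        ext i
        simpa using h2 i (Finset.mem_univ i)
      rw [this]
      rfl
    · have := mul_self_pos.2 hb
      linarith

/-- An irreducible subalgebra `𝔤 ⊆ co(1,n+1)` not contained in `so(1,n+1)`
equals `co(1,n+1)`. -/
theorem irreducible_is_co (n : ℕ) (g : Set (Module.End ℝ (Mink n)))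
    (hsub : IsLieSub g) (hg : g ⊆ coSet (minkB n))
    (hirr : Irred g) (hnot : ¬ g ⊆ soSet (minkB n)) :
    g = coSet (minkB n) := by
  rcases Nat.eq_zero_or_pos n with hn | hn
  · subst hn
    exfalso
    have hinv : Invariant g (Submodule.span ℝ {pvec 0}) := by
      intro F hF x hx
      obtain ⟨s, rfl⟩ := Submodule.mem_span_singleton.1 hx
      obtain ⟨c, S, hS, rfl⟩ := hg hF
      have h1 := so_self (mink_lor 0) hS (pvec 0)
      rw [minkB_apply] at h1
      simp [pvec] at h1
      rw [map_smul]
      apply Submodule.smul_mem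
      rw [Submodule.mem_span_singleton]
      refine ⟨c + (S (pvec 0)).1, ?_⟩
      refine Prod.ext ?_ (Prod.ext (Subsingleton.elim _ _) ?_)
      · simp [pvec]
      · simp [pvec, h1]
    rcases hirr _ hinv with h0 | h0
    · rw [Submodule.span_singleton_eq_bot] at h0
      have := congrArg Prod.fst h0
      simp [pvec] at this
    · have : qvec 0 ∈ Submodule.span ℝ {pvec 0} := by rw [h0]; trivial
      obtain ⟨s, hs⟩ := Submodule.mem_span_singleton.1 this
      have := congrArg (fun v => v.2.2) hs
      simp [pvec, qvec] at this
  · refine main_abstract ?_ (mink_lor n) g hsub hg hirr hnot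
    simp [Mink]
    omega

end Weyl
end
end

section
/- Let 𝔤 ⊆ co(1,n+1) be a weakly irreducible subalgebra not contained in so(1,n+1), and let ḡ := pr_{so(1,n+1)}𝔤 be its projection to so(1,n+1). Then ḡ is weakly irreducible, and exactly one of the following holds: (a) ℝ·id ⊆ 𝔤, in which case 𝔤 = ℝ·id ⊕ ḡ; (b) ℝ·id ⊄ 𝔤, in which case 𝔤 = {θ(B)·id + B : B ∈ ḡ} for a nonzero linear map θ : ḡ → ℝ, and this θ necessarily vanishes on the commutant [ḡ,ḡ]. -/
open Module

noncomputable section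

namespace Weyl

variable {V : Type*} [AddCommGroup V] [Module ℝ V]

/-- The projection `pr_{so(1,n+1)} g` of `g ⊆ co(1,n+1)` to `so(1,n+1)` along `ℝ·id`. -/
def prSO (n : ℕ) (g : Set (Module.End ℝ (Mink n))) : Set (Module.End ℝ (Mink n)) :=
  {S | S ∈ soSet (minkB n) ∧ ∃ c : ℝ, c • (1 : Module.End ℝ (Mink n)) + S ∈ g}

/-- Let `𝔤 ⊆ co(1,n+1)` be weakly irreducible and not contained in
`so(1,n+1)`, and let `ḡ = pr_{so(1,n+1)} 𝔤`.  Then `ḡ` is weakly irreducible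
and exactly one of the following holds: (a) `id ∈ 𝔤` and `𝔤 = ℝ·id ⊕ ḡ`;
(b) `id ∉ 𝔤` and `𝔤 = {θ(B)·id + B : B ∈ ḡ}` for a nonzero linear map
`θ : ḡ → ℝ` vanishing on the commutant `[ḡ, ḡ]`. -/
theorem weakly_irreducible_dichotomy (n : ℕ) (g : Set (Module.End ℝ (Mink n)))
    (hsub : IsLieSub g) (hg : g ⊆ coSet (minkB n))
    (hwi : WeaklyIrred (minkB n) g) (hnot : ¬ g ⊆ soSet (minkB n)) :
    WeaklyIrred (minkB n) (prSO n g) ∧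
    (((1 : Module.End ℝ (Mink n)) ∈ g ∧
        g = {F | ∃ c : ℝ, ∃ S ∈ prSO n g,
          F = c • (1 : Module.End ℝ (Mink n)) + S}) ∨
     ((1 : Module.End ℝ (Mink n)) ∉ g ∧
        ∃ θ : Module.End ℝ (Mink n) →ₗ[ℝ] ℝ,
          (∃ S ∈ prSO n g, θ S ≠ 0) ∧
          g = {F | ∃ S ∈ prSO n g, F = θ S • (1 : Module.End ℝ (Mink n)) + S} ∧
          ∀ S ∈ prSO n g, ∀ S' ∈ prSO n g, θ (S * S' - S' * S) = 0)) := by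
  obtain ⟨h0, hadd, hsmul, hlie⟩ := hsub
  refine ⟨?_, ?_⟩
  · intro W hW hnd
    refine hwi W ?_ hnd
    intro F hF x hx
    obtain ⟨c, S, hS, rfl⟩ := hg hF
    have h1 : S x ∈ W := hW S ⟨hS, c, hF⟩ x hx
    have h2 : (c • (1 : Module.End ℝ (Mink n)) + S) x = c • x + S x := by
      rw [LinearMap.add_apply, LinearMap.smul_apply, Module.End.one_apply]
    rw [h2]
    exact W.add_mem (W.smul_mem c hx) h1
  · by_cases hid : (1 : Module.End ℝ (Mink n)) ∈ g
    · refine Or.inl ⟨hid, ?_⟩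
      ext F
      constructor
      · intro hF
        obtain ⟨c, S, hS, rfl⟩ := hg hF
        exact ⟨c, S, ⟨hS, c, hF⟩, rfl⟩
      · rintro ⟨c, S, ⟨hS, d, hd⟩, rfl⟩
        have h := hadd _ (hsmul (c - d) _ hid) _ hd
        have e : (c - d) • (1 : Module.End ℝ (Mink n)) + (d • (1 : Module.End ℝ (Mink n)) + S)
            = c • (1 : Module.End ℝ (Mink n)) + S := by
          rw [← add_assoc, ← add_smul, sub_add_cancel]
        rwa [e] at h
    · refine Or.inr ⟨hid, ?_⟩
      let G : Submodule ℝ (Module.End ℝ (Mink n)) :=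
        { carrier := g
          add_mem' := fun {a b} ha hb => hadd a ha b hb
          zero_mem' := h0
          smul_mem' := fun c x hx => hsmul c x hx }
      obtain ⟨f, hf1, hfG⟩ := Submodule.exists_le_ker_of_notMem (p := G) hid
      have hf0 : ∀ F ∈ g, f F = 0 := fun F hF => hfG hF
      let θ : Module.End ℝ (Mink n) →ₗ[ℝ] ℝ := (-(f 1)⁻¹) • f
      have key : ∀ (c : ℝ) (S : Module.End ℝ (Mink n)),
          c • (1 : Module.End ℝ (Mink n)) + S ∈ g → θ S = c := by
        intro c S h
        have h3 := hf0 _ h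
        rw [map_add, map_smul, smul_eq_mul] at h3
        have h4 : f S = -(c * f 1) := by linarith
        change (-(f 1)⁻¹) * f S = c
        rw [h4]
        field_simp
      refine ⟨θ, ?_, ?_, ?_⟩
      · obtain ⟨F, hF, hFn⟩ := Set.not_subset.mp hnot
        obtain ⟨c, S, hS, rfl⟩ := hg hF
        refine ⟨S, ⟨hS, c, hF⟩, ?_⟩
        rw [key c S hF]
        rintro rfl
        apply hFn
        rwa [zero_smul, zero_add]
      · ext F
        constructor
        · intro hF
          obtain ⟨c, S, hS, rfl⟩ := hg hF
          exact ⟨S, ⟨hS, c, hF⟩, by rw [key c S hF]⟩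
        · rintro ⟨S, ⟨hS, d, hd⟩, rfl⟩
          rwa [key d S hd]
      · rintro S ⟨hS, c, hc⟩ S' ⟨hS', d, hd⟩
        have h := hlie _ hc _ hd
        apply key
        have e : (c • (1 : Module.End ℝ (Mink n)) + S) * (d • (1 : Module.End ℝ (Mink n)) + S')
            - (d • (1 : Module.End ℝ (Mink n)) + S') * (c • (1 : Module.End ℝ (Mink n)) + S)
            = (0 : ℝ) • (1 : Module.End ℝ (Mink n)) + (S * S' - S' * S) := by
          simp only [add_mul, mul_add, smul_mul_assoc, mul_smul_comm, one_mul, mul_one,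
            smul_add, smul_smul, zero_smul, mul_comm d c]
          abel
        rwa [e] at h

end Weyl
end
end
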